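/- arXiv:2312.16103 — 4 statements merged into one kernel-verified Lean document; each statement's English description precedes it below -/
import Mathlib

section
/- Let p be a probability mass function on ℕ with finite mean β := Σ_{k≥0} k·p(k) < ∞. Then the Shannon entropy H(p) := Σ_{k≥0} −p(k)·log p(k) is finite and satisfies H(p) ≤ (β + 1)·log 2. -/
/-!
Gibbs' inequality bounds the entropy of `p` by its cross entropy `-∑ p k * log (q k)` relative to
any weights `q` of no larger total mass. For geometric weights, `log (q k)` is affine in `k`, so the
cross entropy depends only on the mass and the mean of `p`; ratio `1 / 2` gives the stated bound.
-/

open Real (log negMulLog)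

lemma negMulLog_le_neg_mul_log_add_sub {x y : ℝ} (hx : 0 ≤ x) (hy : 0 ≤ y) (hxy : y = 0 → x = 0) :
    negMulLog x ≤ -(x * log y) + (y - x) := by
  obtain rfl | hy := hy.eq_or_lt
  · simp [hxy rfl]
  calc negMulLog x = negMulLog (y * (x / y)) := by rw [mul_div_cancel₀ _ hy.ne']
    _ = x / y * negMulLog y + y * negMulLog (x / y) := Real.negMulLog_mul _ _
    _ ≤ x / y * negMulLog y + y * (1 - x / y) := by
      gcongr
      exact Real.negMulLog_le_one_sub_self (by positivity)
    _ = -(x * log y) + (y - x) := by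
      rw [Real.negMulLog]
      field_simp

section Gibbs

variable {ι : Type*} {p q : ι → ℝ}

lemma summable_negMulLog_of_summable_mul_log (hp : ∀ i, 0 ≤ p i) (hq : ∀ i, 0 ≤ q i)
    (hpq : ∀ i, q i = 0 → p i = 0) (hps : Summable p) (hqs : Summable q)
    (hcross : Summable fun i ↦ p i * log (q i)) :
    Summable fun i ↦ negMulLog (p i) := by
  refine .of_norm_bounded_eventually (hcross.neg.add (hqs.sub hps)) ?_
  have hle_one : ∀ᶠ i in Filter.cofinite, p i ≤ 1 :=
    hps.tendsto_cofinite_zero.eventually_le_const one_pos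
  filter_upwards [hle_one] with i hi
  rw [Real.norm_of_nonneg (Real.negMulLog_nonneg (hp i) hi)]
  exact negMulLog_le_neg_mul_log_add_sub (hp i) (hq i) (hpq i)

lemma tsum_negMulLog_le_neg_tsum_mul_log (hp : ∀ i, 0 ≤ p i) (hq : ∀ i, 0 ≤ q i)
    (hpq : ∀ i, q i = 0 → p i = 0) (hps : Summable p) (hqs : Summable q)
    (hcross : Summable fun i ↦ p i * log (q i)) (hmass : ∑' i, q i ≤ ∑' i, p i) :
    ∑' i, negMulLog (p i) ≤ -∑' i, p i * log (q i) := by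
  have hent := summable_negMulLog_of_summable_mul_log hp hq hpq hps hqs hcross
  have hsum := hcross.hasSum.neg.add (hqs.hasSum.sub hps.hasSum)
  have hle := hasSum_le (fun i ↦ negMulLog_le_neg_mul_log_add_sub (hp i) (hq i) (hpq i))
    hent.hasSum hsum
  linarith

end Gibbs

lemma hasSum_mul_log_geometric {p : ℕ → ℝ} {m β c r : ℝ} (hp : HasSum p m)
    (hmean : HasSum (fun k : ℕ ↦ (k : ℝ) * p k) β) (hc : c ≠ 0) (hr : r ≠ 0) :
    HasSum (fun k ↦ p k * log (c * r ^ k)) (m * log c + β * log r) := by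
  refine ((hp.mul_right (log c)).add (hmean.mul_right (log r))).congr_fun fun k ↦ ?_
  rw [Real.log_mul hc (pow_ne_zero k hr), Real.log_pow]
  ring

lemma summable_of_summable_natCast_mul {f : ℕ → ℝ} (hf : Summable fun k : ℕ ↦ (k : ℝ) * f k) :
    Summable f := by
  refine .of_norm_bounded_eventually_nat hf.norm ?_
  filter_upwards [Filter.eventually_ge_atTop 1] with k hk
  rw [norm_mul, Real.norm_natCast]
  exact le_mul_of_one_le_left (norm_nonneg _) (mod_cast hk)

theorem entropy_le_of_finite_mean_general {p : ℕ → ℝ} (hp : ∀ k, 0 ≤ p k)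
    (hmean : Summable fun k : ℕ ↦ (k : ℝ) * p k) {r : ℝ} (hr0 : 0 < r) (hr1 : r < 1) :
    Summable (fun k ↦ negMulLog (p k)) ∧
      ∑' k, negMulLog (p k) ≤ negMulLog (∑' k, p k) -
        ((∑' k, p k) * log (1 - r) + (∑' k : ℕ, (k : ℝ) * p k) * log r) := by
  have hps : Summable p := summable_of_summable_natCast_mul hmean
  obtain hm | hm := (tsum_nonneg hp).eq_or_lt
  · obtain rfl : p = 0 := (hasSum_zero_iff_of_nonneg hp).1 (hm ▸ hps.hasSum)
    simp
  set m := ∑' k, p k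
  have hr : 0 < 1 - r := sub_pos.2 hr1
  have hq : ∀ k : ℕ, 0 < m * (1 - r) * r ^ k := fun k ↦ by positivity
  have hqm : HasSum (fun k : ℕ ↦ m * (1 - r) * r ^ k) m := by
    simpa [hr.ne'] using (hasSum_geometric_of_lt_one hr0.le hr1).mul_left (m * (1 - r))
  have hcross := hasSum_mul_log_geometric hps.hasSum hmean.hasSum (mul_pos hm hr).ne' hr0.ne'
  have hpq : ∀ k : ℕ, m * (1 - r) * r ^ k = 0 → p k = 0 := fun k hk ↦ absurd hk (hq k).ne'
  refine ⟨summable_negMulLog_of_summable_mul_log hp (fun k ↦ (hq k).le) hpq hps hqm.summable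
    hcross.summable, ?_⟩
  calc ∑' k, negMulLog (p k) ≤ -∑' k, p k * log (m * (1 - r) * r ^ k) :=
        tsum_negMulLog_le_neg_tsum_mul_log hp (fun k ↦ (hq k).le) hpq hps hqm.summable
          hcross.summable hqm.tsum_eq.le
    _ = negMulLog m - (m * log (1 - r) + (∑' k : ℕ, (k : ℝ) * p k) * log r) := by
        rw [hcross.tsum_eq, Real.log_mul hm.ne' hr.ne', Real.negMulLog]
        ring

/-- **Entropy bound via comparison with Geometric(1/2).**
If `p` is a probability mass function on `ℕ` with finite mean `β`, then the Shannon
entropy `H(p) = ∑ₖ -(p k * log (p k))` is finite (i.e. the series is summable) and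
`H(p) ≤ (β + 1) * log 2`.  (The convention `0 * log 0 = 0` is automatic since
`Real.log 0 = 0` in Lean.) -/
theorem entropy_le_of_finite_mean (p : ℕ → ℝ)
    (hp0 : ∀ k, 0 ≤ p k) (hp1 : HasSum p 1)
    (hmean : Summable fun k : ℕ => (k : ℝ) * p k) :
    Summable (fun k => -(p k * Real.log (p k))) ∧
      ∑' k, -(p k * Real.log (p k)) ≤ ((∑' k : ℕ, (k : ℝ) * p k) + 1) * Real.log 2 := by
  have hgeom := entropy_le_of_finite_mean_general hp0 hmean (r := 2⁻¹) (by norm_num) (by norm_num)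
  rw [hp1.tsum_eq, show (1 : ℝ) - 2⁻¹ = 2⁻¹ by norm_num] at hgeom
  simpa [Real.negMulLog, add_mul, add_comm] using hgeom
end

section
/- Let ρ be a probability mass function on ℕ with mean β := Σ_{k≥0} k·ρ(k) ∈ (0,∞) and suppose Σ_{k≥0} ρ(k)·k·log k = ∞. Let Poi_β denote the Poisson distribution Poi_β(k) := e^{−β}·β^k/k!. Then the relative entropy H(ρ ‖ Poi_β) = Σ_{k≥0} ρ(k)·log(ρ(k)/Poi_β(k)) equals +∞; more precisely, the negative parts satisfy Σ_{k≥0} ρ(k)·max(0, −log(ρ(k)/Poi_β(k))) < ∞ while Σ_{k≥0} ρ(k)·max(0, log(ρ(k)/Poi_β(k))) = ∞. -/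
/-!
The negative part of a relative entropy is summable because `x * (-log (x / y)) ≤ y`. Applied to a
second weight `r`, the same inequality gives `p * log (r / q) ≤ p * log (p / q) + r`. Hence, if the
positive part of the entropy of `p` relative to `q` is summable, so is the positive part of
`p * log (r / q)` for every summable `r`. For the Poisson weights `q` and `r k = exp (-k)`,
Stirling's bound makes `log (r k / q k)` grow like `k * log k` up to terms linear in `k`, and those
are controlled by the mean.
-/

open Real InformationTheory ProbabilityTheory
open scoped Nat

section RelativeEntropy

variable {x y z : ℝ}

theorem mul_neg_log_div_le (hx : 0 ≤ x) (hy : 0 ≤ y) : x * -log (x / y) ≤ y := by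
  rcases hy.eq_or_lt with rfl | hy
  · simp
  have hkl : 0 ≤ y * klFun (x / y) := mul_nonneg hy.le (klFun_nonneg (by positivity))
  have hexpand : y * klFun (x / y) = x * log (x / y) + y - x := by
    rw [klFun_apply]
    field_simp
  linarith

theorem mul_log_div_le_mul_log_div_add (hx : 0 ≤ x) (hy : y ≠ 0) (hz : 0 < z) :
    x * log (z / y) ≤ x * log (x / y) + z := by
  rcases hx.eq_or_lt with rfl | hx
  · simpa using hz.le
  calc
    x * log (z / y) = x * log (x / y) + x * -log (x / z) := by
      rw [log_div hz.ne' hy, log_div hx.ne' hy, log_div hx.ne' hz.ne']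
      ring
    _ ≤ x * log (x / y) + z := by
      gcongr
      exact mul_neg_log_div_le hx.le hz.le

variable {ι : Type*} {p q r : ι → ℝ}

theorem summable_mul_max_zero_neg_log_div (hp : ∀ i, 0 ≤ p i) (hq : ∀ i, 0 ≤ q i)
    (hqs : Summable q) : Summable fun i => p i * max 0 (-log (p i / q i)) := by
  refine hqs.of_nonneg_of_le (fun i => mul_nonneg (hp i) (le_max_left _ _)) fun i => ?_
  rw [mul_max_of_nonneg _ _ (hp i), mul_zero]
  exact max_le (hq i) (mul_neg_log_div_le (hp i) (hq i))

theorem summable_mul_max_zero_log_div_of_summable (hp : ∀ i, 0 ≤ p i) (hq : ∀ i, q i ≠ 0)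
    (hr : ∀ i, 0 < r i) (hrs : Summable r)
    (hpq : Summable fun i => p i * max 0 (log (p i / q i))) :
    Summable fun i => p i * max 0 (log (r i / q i)) := by
  refine (hpq.add hrs).of_nonneg_of_le (fun i => mul_nonneg (hp i) (le_max_left _ _)) fun i => ?_
  have hpi := hp i
  have hri := hr i
  rw [mul_max_of_nonneg _ _ hpi, mul_zero]
  refine max_le (by positivity) ?_
  calc
    p i * log (r i / q i) ≤ p i * log (p i / q i) + r i :=
      mul_log_div_le_mul_log_div_add hpi (hq i) hri
    _ ≤ p i * max 0 (log (p i / q i)) + r i := by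
      gcongr
      exact le_max_right _ _

end RelativeEntropy

section Poisson

theorem mul_log_sub_self_le_log_factorial (n : ℕ) : n * log n - n ≤ log n ! := by
  rcases n.eq_zero_or_pos with rfl | hn
  · simp
  have hlog_two_pi : 0 ≤ log (2 * π) := log_nonneg (by linarith [pi_gt_three])
  linarith [Stirling.le_log_factorial_stirling hn.ne', log_natCast_nonneg n]

variable {β : ℝ}

theorem log_exp_neg_div_poisson (hβ : 0 < β) (k : ℕ) :
    log (exp (-k) / (exp (-β) * β ^ k / k !)) = log k ! + β - (1 + log β) * k := by
  rw [log_div (by positivity) (by positivity), log_div (by positivity) (by positivity),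
    log_mul (by positivity) (by positivity), log_exp, log_exp, log_pow]
  ring

theorem mul_log_le_log_exp_neg_div_poisson_add (hβ : 0 < β) (k : ℕ) :
    k * log k ≤ log (exp (-k) / (exp (-β) * β ^ k / k !)) + (2 + log β) * k := by
  rw [log_exp_neg_div_poisson hβ]
  linarith [mul_log_sub_self_le_log_factorial k]

theorem summable_mul_mul_log_of_summable_mul_log_div_poisson {ρ : ℕ → ℝ} (hρ : ∀ k, 0 ≤ ρ k)
    (hmean : Summable fun k : ℕ => k * ρ k) (hβ : 0 < β)
    (hent : Summable fun k : ℕ => ρ k * max 0 (log (ρ k / (exp (-β) * β ^ k / k !)))) :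
    Summable fun k : ℕ => ρ k * (k * log k) := by
  have hexp : Summable fun k : ℕ =>
      ρ k * max 0 (log (exp (-k) / (exp (-β) * β ^ k / k !))) :=
    summable_mul_max_zero_log_div_of_summable hρ (fun k => by positivity)
      (fun k => exp_pos _) summable_exp_neg_nat hent
  refine (hexp.add (hmean.mul_left (2 + log β))).of_nonneg_of_le
    (fun k => mul_nonneg (hρ k) (mul_nonneg k.cast_nonneg (log_natCast_nonneg k))) fun k => ?_
  have hk : k * log k ≤ max 0 (log (exp (-k) / (exp (-β) * β ^ k / k !))) + (2 + log β) * k :=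
    (mul_log_le_log_exp_neg_div_poisson_add hβ k).trans (by gcongr; exact le_max_right _ _)
  calc
    ρ k * (k * log k)
        ≤ ρ k * (max 0 (log (exp (-k) / (exp (-β) * β ^ k / k !))) + (2 + log β) * k) :=
      mul_le_mul_of_nonneg_left hk (hρ k)
    _ = ρ k * max 0 (log (exp (-k) / (exp (-β) * β ^ k / k !))) + (2 + log β) * (k * ρ k) := by
      ring

theorem relEnt_poisson_eq_top_of_klogk_infinite_general {ρ : ℕ → ℝ} (hρ : ∀ k, 0 ≤ ρ k)
    (hmean : Summable fun k : ℕ => k * ρ k) (hβ : 0 < β)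
    (hklogk : ¬ Summable fun k : ℕ => ρ k * (k * log k)) :
    (Summable fun k : ℕ => ρ k * max 0 (-log (ρ k / (exp (-β) * β ^ k / k !)))) ∧
      ¬ Summable fun k : ℕ => ρ k * max 0 (log (ρ k / (exp (-β) * β ^ k / k !))) := by
  have hpoisson : Summable fun k : ℕ => exp (-β) * β ^ k / k ! :=
    (hasSum_one_poissonMeasure ⟨β, hβ.le⟩).summable
  exact ⟨summable_mul_max_zero_neg_log_div hρ (fun k => by positivity) hpoisson,
    fun hent => hklogk (summable_mul_mul_log_of_summable_mul_log_div_poisson hρ hmean hβ hent)⟩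

end Poisson

/-- **Infinite relative entropy with respect to Poisson when `k log k` moment is infinite.**
Let `ρ` be a pmf on `ℕ` with mean `β ∈ (0, ∞)` and with
`∑ₖ ρ k * (k * log k) = ∞` (i.e. the series of these nonnegative terms is not summable).
Let `Poiβ k = exp (-β) * β ^ k / k!`.  Then the relative entropy
`H(ρ ‖ Poiβ) = ∑ₖ ρ k * log (ρ k / Poiβ k)` is `+∞`: the negative parts
`ρ k * max 0 (-(log (ρ k / Poiβ k)))` form a summable series, while the positive parts
`ρ k * max 0 (log (ρ k / Poiβ k))` do not. -/
theorem relEnt_poisson_eq_top_of_klogk_infinite (ρ : ℕ → ℝ) (β : ℝ)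
    (hρ0 : ∀ k, 0 ≤ ρ k) (hρ1 : HasSum ρ 1)
    (hmean : Summable fun k : ℕ => (k : ℝ) * ρ k)
    (hβ : β = ∑' k : ℕ, (k : ℝ) * ρ k) (hβpos : 0 < β)
    (hklogk : ¬ Summable fun k : ℕ => ρ k * ((k : ℝ) * Real.log (k : ℝ))) :
    (Summable fun k : ℕ =>
        ρ k * max 0 (-(Real.log (ρ k / (Real.exp (-β) * β ^ k / (Nat.factorial k : ℝ)))))) ∧
      ¬ Summable fun k : ℕ =>
        ρ k * max 0 (Real.log (ρ k / (Real.exp (-β) * β ^ k / (Nat.factorial k : ℝ)))) :=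
  relEnt_poisson_eq_top_of_klogk_infinite_general hρ0 hmean hβpos hklogk
end

section
/- Under the stated setup, if Σ_{n=0}^M n·α(n) · Σ_{x∈𝒳} ν(x)·h(x) < c < κ·max_{x∈𝒳} h(x), then there exists λ > 0 such that g(λ) = c. -/
/-!
Tilting a weight `ν` by `exp (t * h)` concentrates it on the maximizers of `h` as `t → ∞`, at rate
`1 / t`: a point at depth `d` below the maximum loses the factor `exp (-t * d)` relative to it, and
`t * d * exp (-t * d) ≤ 1`. Hence `g` tends to `κ * max h`; the index `n = 0`, which is never
tilted, has weight `n * α n = 0`. Since `g` is continuous and `g 0 < c < κ * max h`, the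
intermediate value theorem on `(0, ∞)` gives the value `c`.
-/

open Filter Set Topology

theorem sub_mul_exp_le_exp_div {t : ℝ} (ht : 0 < t) (a b : ℝ) :
    (a - b) * Real.exp (t * b) ≤ Real.exp (t * a) / t := by
  rw [le_div_iff₀ ht]
  calc (a - b) * Real.exp (t * b) * t
      = t * (a - b) * Real.exp (t * b) := by ring
    _ ≤ Real.exp (t * (a - b)) * Real.exp (t * b) := by
        gcongr
        linarith [Real.add_one_le_exp (t * (a - b))]
    _ = Real.exp (t * a) := by rw [← Real.exp_add]; ring_nf

section TiltedMean

variable {𝒳 : Type*} [Fintype 𝒳] {ν : 𝒳 → ℝ} {h : 𝒳 → ℝ} {x₀ : 𝒳} {t : ℝ}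

/-- The partition function `Z(t) = ∑ₓ ν(x) exp (t h(x))` of the weight `ν` and the observable `h`,
which normalizes the Gibbs law with density proportional to `exp (t h)`. -/
noncomputable def partitionFunction (ν h : 𝒳 → ℝ) (t : ℝ) : ℝ :=
  ∑ x, ν x * Real.exp (t * h x)

/-- The expectation of `h` under the Gibbs law `ν(x) exp (t h(x)) / Z(t)`, where `ν` need not have
total mass one; in the notation of the theorem, `g λ = ∑ₙ n α(n) tiltedMean ν h (λ n)`. -/
noncomputable def tiltedMean (ν h : 𝒳 → ℝ) (t : ℝ) : ℝ :=
  (∑ x, ν x * h x * Real.exp (t * h x)) / partitionFunction ν h t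

theorem mul_exp_le_partitionFunction (hν : ∀ x, 0 ≤ ν x) (h : 𝒳 → ℝ) (t : ℝ) (x : 𝒳) :
    ν x * Real.exp (t * h x) ≤ partitionFunction ν h t :=
  Finset.single_le_sum (f := fun y ↦ ν y * Real.exp (t * h y))
    (fun y _ ↦ mul_nonneg (hν y) (Real.exp_pos _).le) (Finset.mem_univ x)

theorem partitionFunction_pos (hν : ∀ x, 0 ≤ ν x) (hx₀ : 0 < ν x₀) (h : 𝒳 → ℝ) (t : ℝ) :
    0 < partitionFunction ν h t :=
  (mul_pos hx₀ (Real.exp_pos _)).trans_le (mul_exp_le_partitionFunction hν h t x₀)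

theorem continuous_tiltedMean (hν : ∀ x, 0 ≤ ν x) (hx₀ : 0 < ν x₀) (h : 𝒳 → ℝ) :
    Continuous (tiltedMean ν h) :=
  Continuous.div (by fun_prop) (by unfold partitionFunction; fun_prop)
    fun t ↦ (partitionFunction_pos hν hx₀ h t).ne'

theorem tiltedMean_zero (ν h : 𝒳 → ℝ) : tiltedMean ν h 0 = (∑ x, ν x * h x) / ∑ x, ν x := by
  simp [tiltedMean, partitionFunction]

theorem mul_tiltedMean_eq_sum (b : ℝ) (ν h : 𝒳 → ℝ) (t : ℝ) :
    b * tiltedMean ν h t =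
      ∑ x, b * ν x * h x * Real.exp (t * h x) / ∑ y, ν y * Real.exp (t * h y) := by
  simp only [tiltedMean, partitionFunction, Finset.sum_div, Finset.mul_sum, mul_assoc,
    mul_div_assoc]

theorem sub_tiltedMean (hZ : partitionFunction ν h t ≠ 0) (a : ℝ) :
    a - tiltedMean ν h t =
      (∑ x, ν x * ((a - h x) * Real.exp (t * h x))) / partitionFunction ν h t := by
  rw [tiltedMean, sub_div' hZ, partitionFunction, Finset.mul_sum, ← Finset.sum_sub_distrib]
  congr 1
  exact Finset.sum_congr rfl fun x _ ↦ by ring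

theorem tiltedMean_le {a : ℝ} (hν : ∀ x, 0 ≤ ν x) (hx₀ : 0 < ν x₀) (ha : ∀ x, h x ≤ a)
    (t : ℝ) : tiltedMean ν h t ≤ a := by
  have hZ := partitionFunction_pos hν hx₀ h t
  rw [← sub_nonneg, sub_tiltedMean hZ.ne']
  exact div_nonneg (Finset.sum_nonneg fun x _ ↦
    mul_nonneg (hν x) (mul_nonneg (sub_nonneg.2 (ha x)) (Real.exp_pos _).le)) hZ.le

theorem sub_tiltedMean_le (hν : ∀ x, 0 ≤ ν x) (hx₀ : 0 < ν x₀) (ht : 0 < t) :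
    h x₀ - tiltedMean ν h t ≤ (∑ x, ν x) / ν x₀ / t := by
  rw [sub_tiltedMean (partitionFunction_pos hν hx₀ h t).ne']
  calc (∑ x, ν x * ((h x₀ - h x) * Real.exp (t * h x))) / partitionFunction ν h t
      ≤ (∑ x, ν x * (Real.exp (t * h x₀) / t)) / (ν x₀ * Real.exp (t * h x₀)) := by
        have hsum : 0 ≤ ∑ x, ν x * (Real.exp (t * h x₀) / t) :=
          Finset.sum_nonneg fun x _ ↦ mul_nonneg (hν x) (by positivity)
        gcongr with x
        · exact hν x
        · exact sub_mul_exp_le_exp_div ht (h x₀) (h x)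
        · exact mul_exp_le_partitionFunction hν h t x₀
    _ = (∑ x, ν x) / ν x₀ / t := by rw [← Finset.sum_mul]; field_simp

theorem tendsto_tiltedMean_atTop (hν : ∀ x, 0 ≤ ν x) (hx₀ : 0 < ν x₀) (hmax : ∀ x, h x ≤ h x₀) :
    Tendsto (tiltedMean ν h) atTop (𝓝 (h x₀)) := by
  have hlower : Tendsto (fun t ↦ h x₀ - (∑ x, ν x) / ν x₀ / t) atTop (𝓝 (h x₀)) := by
    simpa using (tendsto_const_nhds (x := h x₀)).sub (tendsto_id.const_div_atTop _)
  refine tendsto_of_tendsto_of_tendsto_of_le_of_le' hlower tendsto_const_nhds ?_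
    (.of_forall (tiltedMean_le hν hx₀ hmax))
  filter_upwards [eventually_gt_atTop 0] with t ht
  exact sub_le_comm.1 (sub_tiltedMean_le hν hx₀ ht)

theorem tendsto_sum_mul_tiltedMean_atTop {ι : Type*} {s : Finset ι} {r : ι → ℝ}
    (hν : ∀ x, 0 ≤ ν x) (hx₀ : 0 < ν x₀) (hmax : ∀ x, h x ≤ h x₀) (hr : ∀ i ∈ s, 0 ≤ r i)
    (α : ι → ℝ) :
    Tendsto (fun t ↦ ∑ i ∈ s, r i * α i * tiltedMean ν h (t * r i)) atTop
      (𝓝 ((∑ i ∈ s, r i * α i) * h x₀)) := by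
  rw [Finset.sum_mul]
  refine tendsto_finsetSum s fun i hi ↦ ?_
  rcases (hr i hi).eq_or_lt with hri | hri
  · simp [← hri]
  · exact ((tendsto_tiltedMean_atTop hν hx₀ hmax).comp
      (tendsto_id.atTop_mul_const hri)).const_mul _

theorem gibbs_exists_lambda_general {ι : Type*} {s : Finset ι} {r α : ι → ℝ} {c : ℝ}
    (hν : ∀ x, 0 ≤ ν x) (hx₀ : 0 < ν x₀) (hmax : ∀ x, h x ≤ h x₀) (hr : ∀ i ∈ s, 0 ≤ r i)
    (hc_gt : (∑ i ∈ s, r i * α i) * ((∑ x, ν x * h x) / ∑ x, ν x) < c)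
    (hc_lt : c < (∑ i ∈ s, r i * α i) * h x₀) :
    ∃ t : ℝ, 0 < t ∧ ∑ i ∈ s, r i * α i * tiltedMean ν h (t * r i) = c := by
  set G : ℝ → ℝ := fun t ↦ ∑ i ∈ s, r i * α i * tiltedMean ν h (t * r i) with hG
  have hG_cont : Continuous G := by
    have := continuous_tiltedMean hν hx₀ h
    fun_prop
  have hG_zero : G 0 = (∑ i ∈ s, r i * α i) * ((∑ x, ν x * h x) / ∑ x, ν x) := by
    simp only [hG, zero_mul, tiltedMean_zero, Finset.sum_mul]
  exact isPreconnected_Ioi.intermediate_value_Ioo (l₁ := 𝓝[>] 0) inf_le_right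
    (le_principal_iff.2 (Ioi_mem_atTop 0)) hG_cont.continuousOn
    (hG_cont.continuousWithinAt (x := 0))
    (tendsto_sum_mul_tiltedMean_atTop hν hx₀ hmax hr α) ⟨hG_zero ▸ hc_gt, hc_lt⟩

end TiltedMean

/-- **Existence of a positive tilting parameter.**
In the Gibbs setup (nonempty finite `𝒳`, strictly positive pmf `ν`, pmf `α` on
`{0, …, M}` with mean `κ > 0`, `h : 𝒳 → ℝ`,
`g λ = ∑_{n=0}^M ∑_x n·α n·ν x·h x·exp (λ·n·h x) / (∑_y ν y·exp (λ·n·h y))`),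
if `g 0 = (∑_n n·α n)·(∑_x ν x·h x) < c < κ·max_x h x`, then there exists `λ > 0`
with `g λ = c`. -/
theorem gibbs_exists_lambda
    {𝒳 : Type} [Fintype 𝒳] [Nonempty 𝒳]
    (ν : 𝒳 → ℝ) (hν0 : ∀ x, 0 < ν x) (hν1 : ∑ x, ν x = 1)
    (M : ℕ) (α : ℕ → ℝ) (hα0 : ∀ n, 0 ≤ α n)
    (hα1 : ∑ n ∈ Finset.range (M + 1), α n = 1)
    (κ : ℝ) (hκdef : κ = ∑ n ∈ Finset.range (M + 1), (n : ℝ) * α n) (hκpos : 0 < κ)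
    (h : 𝒳 → ℝ) (g : ℝ → ℝ)
    (hg : ∀ lam : ℝ, g lam =
      ∑ n ∈ Finset.range (M + 1), ∑ x,
        (n : ℝ) * α n * ν x * h x * Real.exp (lam * n * h x) /
          (∑ y, ν y * Real.exp (lam * n * h y)))
    (c : ℝ)
    (hc1 : (∑ n ∈ Finset.range (M + 1), (n : ℝ) * α n) * (∑ x, ν x * h x) < c)
    (hc2 : c < κ * Finset.univ.sup' Finset.univ_nonempty h) :
    ∃ lam : ℝ, 0 < lam ∧ g lam = c := by
  obtain ⟨x₀, -, hx₀⟩ := Finset.exists_mem_eq_sup' Finset.univ_nonempty h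
  have hmax (x : 𝒳) : h x ≤ h x₀ := hx₀ ▸ Finset.le_sup' h (Finset.mem_univ x)
  simp only [hg, ← mul_tiltedMean_eq_sum]
  exact gibbs_exists_lambda_general (fun x ↦ (hν0 x).le) (hν0 x₀) hmax
    (fun n _ ↦ n.cast_nonneg) (by rwa [hν1, div_one]) (by rwa [← hκdef, ← hx₀])
end

section
/- Let μ be a probability mass function on T₁ with 0 < β := Σ_τ μ(τ)·deg(τ) < ∞, and let η₁ be the law on T₁ with degree distribution Q and i.i.d. marks, where Q has finite nonzero mean. If μ is absolutely continuous with respect to η₁, then μ̄^{1,o} is absolutely continuous with respect to η̄₁^{1,o}, and consequently H(μ̄^{1,o} ‖ η̄₁^{1,o}) < ∞. -/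
open scoped BigOperators ENNReal Classical

noncomputable section

/-- Depth-1 rooted marked trees: the root mark together with the multiset of
(vertex mark, edge mark toward the root, edge mark at the root) triples of the
neighbors of the root. -/
abbrev T1 (𝒳 𝒴 : Type) : Type := 𝒳 × Multiset (𝒳 × 𝒴 × 𝒴)

section Defs

variable {𝒳 𝒴 : Type} [Fintype 𝒳] [Fintype 𝒴] [DecidableEq 𝒳] [DecidableEq 𝒴]

/-- Degree of the root of a depth-1 tree. -/
def deg (τ : T1 𝒳 𝒴) : ℕ := Multiset.card τ.2

/-- Symmetrized edge-mark distribution `ξ̄(y, y') = (ξ(y, y') + ξ(y', y)) / 2`. -/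
def xiBar (ξ : 𝒴 × 𝒴 → ℝ) (y y' : 𝒴) : ℝ := (ξ (y, y') + ξ (y', y)) / 2

/-- Multinomial coefficient `card m ! / ∏ₛ (multiplicity of s in m)!`. -/
def ordCoeff (m : Multiset (𝒳 × 𝒴 × 𝒴)) : ℝ :=
  (Nat.factorial (Multiset.card m) : ℝ) /
    ∏ s ∈ m.toFinset, (Nat.factorial (m.count s) : ℝ)

/-- The law `η₁` on `T1` with root-degree distribution `Q` and i.i.d. marks:
`η₁ (x, m) = ν x · Q (card m) · (card m)!/∏ₛ count s !· ∏_{(a,y,y') ∈ m} ν a · ξ̄ y y'`. -/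
def eta1 (ν : 𝒳 → ℝ) (ξ : 𝒴 × 𝒴 → ℝ) (Q : ℕ → ℝ) (τ : T1 𝒳 𝒴) : ℝ :=
  ν τ.1 * Q (Multiset.card τ.2) * ordCoeff τ.2 *
    (τ.2.map fun p => ν p.1 * xiBar ξ p.2.1 p.2.2).prod

/-- Mean root degree `β = ∑_τ μ τ · deg τ`. -/
def meanDeg (μ : T1 𝒳 𝒴 → ℝ) : ℝ := ∑' τ : T1 𝒳 𝒴, μ τ * (deg τ : ℝ)

/-- The neighbor–root marginal `μ̄^{1,o}`:
`μ̄^{1,o} ((a,y), (b,y')) = (1/β) ∑_{m} μ (b, m) · (multiplicity of (a,y,y') in m)`. -/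
def nbrRoot (μ : T1 𝒳 𝒴 → ℝ) (p : (𝒳 × 𝒴) × (𝒳 × 𝒴)) : ℝ :=
  (1 / meanDeg μ) *
    ∑' m : Multiset (𝒳 × 𝒴 × 𝒴), μ (p.2.1, m) * (m.count (p.1.1, p.1.2, p.2.2) : ℝ)

/-- First marginal `μ̄¹` of `μ̄^{1,o}`. -/
def marg1 (μ : T1 𝒳 𝒴 → ℝ) (u : 𝒳 × 𝒴) : ℝ := ∑ v : 𝒳 × 𝒴, nbrRoot μ (u, v)

/-- Second marginal `μ̄ᵒ` of `μ̄^{1,o}`. -/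
def margO (μ : T1 𝒳 𝒴 → ℝ) (v : 𝒳 × 𝒴) : ℝ := ∑ u : 𝒳 × 𝒴, nbrRoot μ (u, v)

/-- Conditional law `μ̄^{1|o} (u | v) = μ̄^{1,o}(u,v) / μ̄ᵒ(v)` (and `0` if `μ̄ᵒ(v) = 0`). -/
def condNbr (μ : T1 𝒳 𝒴 → ℝ) (u v : 𝒳 × 𝒴) : ℝ :=
  if 0 < margO μ v then nbrRoot μ (u, v) / margO μ v else 0

/-- `μ̌ (x, m) = η₁ (x, m) · ∏_{(a,y,y') ∈ m} μ̄¹(a,y) / η̄₁¹(a,y)` (product with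
multiplicity; in Lean a ratio with zero denominator is `0`). -/
def muCheck (ν : 𝒳 → ℝ) (ξ : 𝒴 × 𝒴 → ℝ) (Q : ℕ → ℝ) (μ : T1 𝒳 𝒴 → ℝ) (τ : T1 𝒳 𝒴) : ℝ :=
  eta1 ν ξ Q τ *
    (τ.2.map fun p => marg1 μ (p.1, p.2.1) / marg1 (eta1 ν ξ Q) (p.1, p.2.1)).prod

/-- `μ̂ (x, m) = η₁ (x, m) · ∏_{(a,y,y') ∈ m} μ̄^{1|o}((a,y)|(x,y')) / η̄₁^{1|o}((a,y)|(x,y'))`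
(product with multiplicity; a ratio with zero denominator is `0`). -/
def muHat (ν : 𝒳 → ℝ) (ξ : 𝒴 × 𝒴 → ℝ) (Q : ℕ → ℝ) (μ : T1 𝒳 𝒴 → ℝ) (τ : T1 𝒳 𝒴) : ℝ :=
  eta1 ν ξ Q τ *
    (τ.2.map fun p =>
      condNbr μ (p.1, p.2.1) (τ.1, p.2.2) /
        condNbr (eta1 ν ξ Q) (p.1, p.2.1) (τ.1, p.2.2)).prod

end Defs

/-- Relative entropy `H(p ‖ q) = ∑ₛ p s * log (p s / q s)` of probability mass
functions, with value `∞` when `p` is not absolutely continuous with respect to `q`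
(or the defining series diverges); `0·log 0 = 0` is automatic since `Real.log 0 = 0`. -/
def relEnt {S : Type*} (p q : S → ℝ) : ℝ≥0∞ :=
  if (∀ s, q s = 0 → p s = 0) ∧ Summable (fun s => p s * Real.log (p s / q s)) then
    ENNReal.ofReal (∑' s, p s * Real.log (p s / q s))
  else ⊤

/-!
The triple `(a, y, y')` receives positive mass from `μ̄^{1,o}` at `((a, y), (b, y'))` exactly when
some tree with root mark `b` in the support of `μ` contains it, so a larger support of the law of
the tree gives a larger support of the marginal. For `η₁` this needs a finite mean degree: by the
multinomial theorem the weights of the trees of degree `n` sum to `Q n`, so that mean is the mean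
of `Q`. The marginals live on a finite set, where absolute continuity already makes the relative
entropy finite.
-/

section Summation

lemma tsum_eq_zero_iff_forall_of_nonneg {ι : Type*} {f : ι → ℝ} (hf0 : ∀ i, 0 ≤ f i)
    (hf : Summable f) : ∑' i, f i = 0 ↔ ∀ i, f i = 0 := by
  rw [← hf.hasSum_iff, hasSum_zero_iff_of_nonneg hf0, funext_iff]
  simp only [Pi.zero_apply]

variable {α : Type*} [DecidableEq α]

lemma countPerms_eq_multinomial (m : Multiset α) :
    m.countPerms = Nat.multinomial m.toFinset fun a => m.count a := by
  simp only [Multiset.countPerms, Finsupp.multinomial_eq, Multiset.toFinsupp_support]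
  rfl

lemma prod_factorial_count_mul_countPerms (m : Multiset α) :
    (∏ a ∈ m.toFinset, (m.count a).factorial) * m.countPerms = (Multiset.card m).factorial := by
  rw [countPerms_eq_multinomial, Nat.multinomial_spec, Multiset.toFinset_sum_count_eq]

variable [Fintype α]

lemma sum_sym_countPerms_mul_prod {R : Type*} [CommSemiring R] (w : α → R) (n : ℕ) :
    ∑ m : Sym α n, (m.1.countPerms : R) * (m.1.map w).prod = (∑ a, w a) ^ n := by
  rw [Finset.sum_pow, Finset.sym_univ]

lemma summable_card_mul_countPerms_mul_prod_iff {c : ℕ → ℝ} {w : α → ℝ}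
    (hc : ∀ n, 0 ≤ c n) (hw : ∀ a, 0 ≤ w a) :
    (Summable fun m : Multiset α => c (Multiset.card m) * (m.countPerms * (m.map w).prod)) ↔
      Summable fun n => c n * (∑ a, w a) ^ n := by
  let F : (Σ n, Sym α n) → ℝ := fun m => c m.1 * (m.2.1.countPerms * (m.2.1.map w).prod)
  have F_nonneg : ∀ m, 0 ≤ F m := fun m =>
    mul_nonneg (hc _) (mul_nonneg (Nat.cast_nonneg _) (Multiset.prod_map_nonneg fun a _ => hw a))
  have tsum_fiber (n : ℕ) : ∑' m : Sym α n, F ⟨n, m⟩ = c n * (∑ a, w a) ^ n := by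
    rw [tsum_fintype, ← sum_sym_countPerms_mul_prod, Finset.mul_sum]
  have summable_iff : Summable F ↔ Summable fun n => c n * (∑ a, w a) ^ n := by
    simp only [summable_sigma_of_nonneg F_nonneg, Summable.of_finite, implies_true, true_and,
      tsum_fiber]
  rw [← summable_iff, ← (Equiv.sigmaFiberEquiv (Multiset.card (α := α))).summable_iff]
  refine summable_congr ?_
  rintro ⟨n, m, rfl⟩
  rfl

end Summation

section NeighborRootMarginal

variable {𝒳 𝒴 : Type} {μ : T1 𝒳 𝒴 → ℝ}

lemma meanDeg_pos_iff (hμ0 : ∀ τ, 0 ≤ μ τ)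
    (hμ : Summable fun τ : T1 𝒳 𝒴 => μ τ * (deg τ : ℝ)) :
    0 < meanDeg μ ↔ ∃ τ, μ τ ≠ 0 ∧ deg τ ≠ 0 := by
  have term_nonneg (τ : T1 𝒳 𝒴) : 0 ≤ μ τ * (deg τ : ℝ) := mul_nonneg (hμ0 τ) (Nat.cast_nonneg _)
  rw [meanDeg, (tsum_nonneg term_nonneg).lt_iff_ne', ne_eq,
    tsum_eq_zero_iff_forall_of_nonneg term_nonneg hμ, not_forall]
  simp only [mul_eq_zero, Nat.cast_eq_zero, not_or, ne_eq]

variable [DecidableEq 𝒳] [DecidableEq 𝒴]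

lemma summable_mul_count (hμ0 : ∀ τ, 0 ≤ μ τ)
    (hμ : Summable fun τ : T1 𝒳 𝒴 => μ τ * (deg τ : ℝ)) (b : 𝒳) (t : 𝒳 × 𝒴 × 𝒴) :
    Summable fun m : Multiset (𝒳 × 𝒴 × 𝒴) => μ (b, m) * (m.count t : ℝ) :=
  .of_nonneg_of_le (fun _ => mul_nonneg (hμ0 _) (Nat.cast_nonneg _))
    (fun m => mul_le_mul_of_nonneg_left (Nat.cast_le.2 (Multiset.count_le_card t m)) (hμ0 _))
    (hμ.comp_injective (Prod.mk_right_injective b))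

lemma nbrRoot_eq_zero_iff (hμ0 : ∀ τ, 0 ≤ μ τ)
    (hμ : Summable fun τ : T1 𝒳 𝒴 => μ τ * (deg τ : ℝ)) (hβ : 0 < meanDeg μ)
    (p : (𝒳 × 𝒴) × (𝒳 × 𝒴)) :
    nbrRoot μ p = 0 ↔ ∀ m, (p.1.1, p.1.2, p.2.2) ∈ m → μ (p.2.1, m) = 0 := by
  rw [nbrRoot, mul_eq_zero_iff_left (one_div_pos.2 hβ).ne',
    tsum_eq_zero_iff_forall_of_nonneg (fun _ => mul_nonneg (hμ0 _) (Nat.cast_nonneg _))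
      (summable_mul_count hμ0 hμ _ _)]
  simp only [mul_eq_zero, Nat.cast_eq_zero, Multiset.count_eq_zero, or_iff_not_imp_right, not_not]

end NeighborRootMarginal

lemma relEnt_ne_top_of_finite {S : Type*} [Finite S] {p q : S → ℝ}
    (hpq : ∀ s, q s = 0 → p s = 0) : relEnt p q ≠ ⊤ := by
  rw [relEnt, if_pos ⟨hpq, .of_finite⟩]
  exact ENNReal.ofReal_ne_top

section IidMarks

variable {𝒳 𝒴 : Type} {ν : 𝒳 → ℝ} {ξ : 𝒴 × 𝒴 → ℝ} {Q : ℕ → ℝ}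

/-- The law `ν a · ξ̄ y y'` of the marks `(a, y, y')` carried by one neighbor under `η₁`. -/
def nbrMarkLaw (ν : 𝒳 → ℝ) (ξ : 𝒴 × 𝒴 → ℝ) (t : 𝒳 × 𝒴 × 𝒴) : ℝ :=
  ν t.1 * xiBar ξ t.2.1 t.2.2

lemma nbrMarkLaw_nonneg (hν0 : ∀ x, 0 ≤ ν x) (hξ0 : ∀ q, 0 ≤ ξ q) (t : 𝒳 × 𝒴 × 𝒴) :
    0 ≤ nbrMarkLaw ν ξ t :=
  mul_nonneg (hν0 _) (div_nonneg (add_nonneg (hξ0 _) (hξ0 _)) zero_le_two)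

lemma sum_xiBar [Fintype 𝒴] (ξ : 𝒴 × 𝒴 → ℝ) :
    ∑ q : 𝒴 × 𝒴, xiBar ξ q.1 q.2 = ∑ q, ξ q := by
  have sum_swap : ∑ q : 𝒴 × 𝒴, ξ (q.2, q.1) = ∑ q, ξ q := (Equiv.prodComm 𝒴 𝒴).sum_comp ξ
  simp only [xiBar, ← Finset.sum_div, Finset.sum_add_distrib, sum_swap, Prod.mk.eta,
    add_self_div_two]

lemma sum_nbrMarkLaw [Fintype 𝒳] [Fintype 𝒴] (ν : 𝒳 → ℝ) (ξ : 𝒴 × 𝒴 → ℝ) :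
    ∑ t, nbrMarkLaw ν ξ t = (∑ x, ν x) * ∑ q, ξ q := by
  rw [← sum_xiBar, Fintype.sum_mul_sum, Fintype.sum_prod_type]
  rfl

variable [DecidableEq 𝒳] [DecidableEq 𝒴]

lemma ordCoeff_eq_countPerms (m : Multiset (𝒳 × 𝒴 × 𝒴)) : ordCoeff m = m.countPerms := by
  rw [ordCoeff, ← prod_factorial_count_mul_countPerms, Nat.cast_mul, Nat.cast_prod,
    mul_div_cancel_left₀ _ (by positivity)]

lemma eta1_eq_mul_countPerms_mul_prod (ν : 𝒳 → ℝ) (ξ : 𝒴 × 𝒴 → ℝ) (Q : ℕ → ℝ) (τ : T1 𝒳 𝒴) :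
    eta1 ν ξ Q τ =
      ν τ.1 * (Q (deg τ) * (τ.2.countPerms * (τ.2.map (nbrMarkLaw ν ξ)).prod)) := by
  rw [eta1, ordCoeff_eq_countPerms, mul_assoc, mul_assoc]
  rfl

lemma eta1_nonneg (hν0 : ∀ x, 0 ≤ ν x) (hξ0 : ∀ q, 0 ≤ ξ q) (hQ0 : ∀ k, 0 ≤ Q k)
    (τ : T1 𝒳 𝒴) : 0 ≤ eta1 ν ξ Q τ := by
  rw [eta1_eq_mul_countPerms_mul_prod]
  exact mul_nonneg (hν0 _) <| mul_nonneg (hQ0 _) <| mul_nonneg (Nat.cast_nonneg _) <|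
    Multiset.prod_map_nonneg fun t _ => nbrMarkLaw_nonneg hν0 hξ0 t

lemma summable_eta1_mul_deg [Fintype 𝒳] [Fintype 𝒴] (hν0 : ∀ x, 0 ≤ ν x)
    (hξ0 : ∀ q, 0 ≤ ξ q) (hQ0 : ∀ k, 0 ≤ Q k)
    (hQ : Summable fun k : ℕ => (k : ℝ) * Q k * ((∑ x, ν x) * ∑ q, ξ q) ^ k) :
    Summable fun τ : T1 𝒳 𝒴 => eta1 ν ξ Q τ * (deg τ : ℝ) := by
  have c_nonneg (k : ℕ) : 0 ≤ (k : ℝ) * Q k := mul_nonneg (Nat.cast_nonneg k) (hQ0 k)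
  have w_nonneg := nbrMarkLaw_nonneg (ν := ν) (ξ := ξ) hν0 hξ0
  have summable_marks : Summable fun m : Multiset (𝒳 × 𝒴 × 𝒴) =>
      (Multiset.card m : ℝ) * Q (Multiset.card m) *
        (m.countPerms * (m.map (nbrMarkLaw ν ξ)).prod) := by
    rwa [summable_card_mul_countPerms_mul_prod_iff c_nonneg w_nonneg, sum_nbrMarkLaw]
  refine (Summable.mul_of_nonneg .of_finite summable_marks hν0 fun m => ?_).congr fun τ => ?_
  · exact mul_nonneg (c_nonneg _) <| mul_nonneg (Nat.cast_nonneg _) <|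
      Multiset.prod_map_nonneg fun t _ => w_nonneg t
  · rw [eta1_eq_mul_countPerms_mul_prod, deg]
    ring

end IidMarks

theorem nbrRoot_absolutelyContinuous_and_relEnt_lt_top_general
    {𝒳 𝒴 : Type} [Finite 𝒳] [Finite 𝒴] [DecidableEq 𝒳] [DecidableEq 𝒴]
    {η μ : T1 𝒳 𝒴 → ℝ} (hη0 : ∀ τ, 0 ≤ η τ)
    (hη : Summable fun τ : T1 𝒳 𝒴 => η τ * (deg τ : ℝ)) (hμ0 : ∀ τ, 0 ≤ μ τ)
    (hμ : Summable fun τ : T1 𝒳 𝒴 => μ τ * (deg τ : ℝ)) (hβ : 0 < meanDeg μ)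
    (habs : ∀ τ, η τ = 0 → μ τ = 0) :
    (∀ p : (𝒳 × 𝒴) × (𝒳 × 𝒴), nbrRoot η p = 0 → nbrRoot μ p = 0) ∧
      relEnt (nbrRoot μ) (nbrRoot η) ≠ ⊤ := by
  have hβη : 0 < meanDeg η := by
    obtain ⟨τ, hμτ, hdeg⟩ := (meanDeg_pos_iff hμ0 hμ).1 hβ
    exact (meanDeg_pos_iff hη0 hη).2 ⟨τ, mt (habs τ) hμτ, hdeg⟩
  have hac : ∀ p : (𝒳 × 𝒴) × (𝒳 × 𝒴), nbrRoot η p = 0 → nbrRoot μ p = 0 := fun p hp =>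
    (nbrRoot_eq_zero_iff hμ0 hμ hβ p).2 fun m hm =>
      habs _ ((nbrRoot_eq_zero_iff hη0 hη hβη p).1 hp m hm)
  exact ⟨hac, relEnt_ne_top_of_finite hac⟩

/-- **Absolute continuity of the neighbor–root marginals (Lemma `pirllpieta`).**
If `μ` is a pmf on `T1` with mean degree `β ∈ (0, ∞)`, `η₁` is the law with degree
distribution `Q` and i.i.d. marks, and `μ ≪ η₁`, then `μ̄^{1,o} ≪ η̄₁^{1,o}` and
consequently `H(μ̄^{1,o} ‖ η̄₁^{1,o}) < ∞`. -/
theorem nbrRoot_absolutelyContinuous_and_relEnt_lt_top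
    {𝒳 𝒴 : Type} [Fintype 𝒳] [Fintype 𝒴] [DecidableEq 𝒳] [DecidableEq 𝒴]
    (ν : 𝒳 → ℝ) (hν0 : ∀ x, 0 ≤ ν x) (hν1 : ∑ x, ν x = 1)
    (ξ : 𝒴 × 𝒴 → ℝ) (hξ0 : ∀ p, 0 ≤ ξ p) (hξ1 : ∑ p : 𝒴 × 𝒴, ξ p = 1)
    (Q : ℕ → ℝ) (hQ0 : ∀ k, 0 ≤ Q k) (hQ1 : HasSum Q 1)
    (hQm : Summable fun k : ℕ => (k : ℝ) * Q k)
    (hQpos : 0 < ∑' k : ℕ, (k : ℝ) * Q k)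
    (μ : T1 𝒳 𝒴 → ℝ) (hμ0 : ∀ τ, 0 ≤ μ τ) (hμ1 : HasSum μ 1)
    (hβfin : Summable fun τ : T1 𝒳 𝒴 => μ τ * (deg τ : ℝ))
    (hβpos : 0 < meanDeg μ)
    (habs : ∀ τ, eta1 ν ξ Q τ = 0 → μ τ = 0) :
    (∀ p : (𝒳 × 𝒴) × (𝒳 × 𝒴), nbrRoot (eta1 ν ξ Q) p = 0 → nbrRoot μ p = 0) ∧
      relEnt (nbrRoot μ) (nbrRoot (eta1 ν ξ Q)) ≠ ⊤ :=
  nbrRoot_absolutelyContinuous_and_relEnt_lt_top_general (eta1_nonneg hν0 hξ0 hQ0)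
    (summable_eta1_mul_deg hν0 hξ0 hQ0 (by simpa only [hν1, hξ1, mul_one, one_pow] using hQm))
    hμ0 hβfin hβpos habs
end
end
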